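/- arXiv:1903.08719 — 2 statements merged into one kernel-verified Lean document; each statement's English description precedes it below -/
import Mathlib

section
/- The Steiner triple system of order 13 on Z_13 obtained by developing the base blocks {0,2,7} and {0,1,4} modulo 13 is nonsequenceable. -/
/-- `B` is (the block set of) a partial Steiner triple system on the point set `X`:
every block has 3 points and every pair of distinct points lies in at most one block. -/
def isPSTS {X : Type*} [DecidableEq X] (B : Finset (Finset X)) : Prop :=
  (∀ b ∈ B, b.card = 3) ∧
  ∀ p q : X, p ≠ q → (B.filter (fun b => p ∈ b ∧ q ∈ b)).card ≤ 1

/-- `B` is (the block set of) a Steiner triple system on the point set `X`: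
every block has 3 points and every pair of distinct points lies in exactly one block. -/
def isSTS {X : Type*} [DecidableEq X] (B : Finset (Finset X)) : Prop :=
  (∀ b ∈ B, b.card = 3) ∧
  ∀ p q : X, p ≠ q → (B.filter (fun b => p ∈ b ∧ q ∈ b)).card = 1

/-- The finset `S` can be partitioned into blocks of `B`. -/
def blocksPartition {X : Type*} [DecidableEq X] (B : Finset (Finset X)) (S : Finset X) : Prop :=
  ∃ P : Finset (Finset X), P ⊆ B ∧
    (∀ b₁ ∈ P, ∀ b₂ ∈ P, b₁ ≠ b₂ → Disjoint b₁ b₂) ∧ P.biUnion id = S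

/-- `A` is an almost parallel class of `B`: a set of pairwise disjoint blocks
covering all points of `X` except exactly one. -/
def isAPC {X : Type*} [DecidableEq X] [Fintype X] (B A : Finset (Finset X)) : Prop :=
  A ⊆ B ∧ (∀ b₁ ∈ A, ∀ b₂ ∈ A, b₁ ≠ b₂ → Disjoint b₁ b₂) ∧
    ∃ y : X, A.biUnion id = Finset.univ.erase y

/-- `B` is sequenceable: there is a sequencing of the points (a bijection from
`Fin n` to `X`) such that no proper segment can be partitioned into blocks of `B`. -/
def sequenceable {X : Type*} [DecidableEq X] [Fintype X] (B : Finset (Finset X)) : Prop :=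
  ∃ f : Fin (Fintype.card X) ≃ X,
    ∀ i j : Fin (Fintype.card X), i ≤ j →
      ¬((i : ℕ) = 0 ∧ (j : ℕ) = Fintype.card X - 1) →
      ¬ blocksPartition B ((Finset.Icc i j).image f)

/-- The blocks obtained by developing the base blocks modulo 13. -/
def dev13 : Finset (Finset (ZMod 13)) :=
  Finset.univ.biUnion fun t : ZMod 13 =>
    ({{0,2,7}, {0,1,4}} : Finset (Finset (ZMod 13))).image (fun b => b.image (· + t))

/-!
If every point of a system is the one point missed by some almost parallel class, the system is
nonsequenceable: all but the last point of any sequencing form a proper segment that can be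
partitioned into blocks. For a system developed from base blocks over a group, translation reduces
this to a single almost parallel class missing `0`.
-/

open Finset

section Sequencing

variable {X Y : Type*} [DecidableEq X] [DecidableEq Y]

theorem blocksPartition.image {B : Finset (Finset X)} {C : Finset (Finset Y)} {S : Finset X}
    {φ : X → Y} (hS : blocksPartition B S) (hφ : Function.Injective φ)
    (hBC : ∀ b ∈ B, b.image φ ∈ C) : blocksPartition C (S.image φ) := by
  obtain ⟨P, hPB, hdisj, rfl⟩ := hS
  refine ⟨P.image (Finset.image φ), ?_, ?_, ?_⟩
  · exact image_subset_iff.2 fun b hb => hBC b (hPB hb)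
  · simp only [forall_mem_image]
    intro b₁ hb₁ b₂ hb₂ hne
    exact (disjoint_image hφ).2 (hdisj b₁ hb₁ b₂ hb₂ fun h => hne (h ▸ rfl))
  · simp only [image_biUnion, biUnion_image, id]

theorem not_sequenceable_of_forall_blocksPartition_erase [Fintype X] [Nontrivial X]
    {B : Finset (Finset X)} (hB : ∀ y : X, blocksPartition B (univ.erase y)) :
    ¬ sequenceable B := by
  rintro ⟨f, hf⟩
  have hcard : 1 < Fintype.card X := Fintype.one_lt_card
  let first : Fin (Fintype.card X) := ⟨0, by lia⟩
  let penultimate : Fin (Fintype.card X) := ⟨Fintype.card X - 2, by lia⟩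
  let last : Fin (Fintype.card X) := ⟨Fintype.card X - 1, by lia⟩
  have hIcc : Icc first penultimate = univ.erase last := by
    ext i
    simp only [mem_Icc, mem_erase, mem_univ, and_true, ne_eq, Fin.ext_iff, Fin.le_def,
      first, penultimate, last]
    lia
  have himage : (Icc first penultimate).image f = univ.erase (f last) := by
    rw [hIcc, image_erase f.injective, image_univ_equiv]
  have hproper : ¬((first : ℕ) = 0 ∧ (penultimate : ℕ) = Fintype.card X - 1) := by
    simp only [first, penultimate]
    lia
  exact hf first penultimate (Nat.zero_le _) hproper (himage ▸ hB (f last))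

end Sequencing

section Development

variable {G : Type*} [AddGroup G] [Fintype G] [DecidableEq G]

/-- The development of a set `D` of base blocks over a finite group `G`: all right translates
`b + t` of the members `b` of `D`. It generalizes `dev13` to arbitrary base blocks and groups. -/
def development (D : Finset (Finset G)) : Finset (Finset G) :=
  univ.biUnion fun t : G => D.image fun b => b.image (· + t)

theorem mem_development {D : Finset (Finset G)} {b : Finset G} :
    b ∈ development D ↔ ∃ t : G, ∃ d ∈ D, d.image (· + t) = b := by
  simp only [development, mem_biUnion, mem_univ, true_and, mem_image]

theorem image_add_right_mem_development {D : Finset (Finset G)} {b : Finset G}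
    (hb : b ∈ development D) (y : G) : b.image (· + y) ∈ development D := by
  obtain ⟨t, d, hd, rfl⟩ := mem_development.1 hb
  refine mem_development.2 ⟨t + y, d, hd, ?_⟩
  simp only [image_image, Function.comp_def, add_assoc]

theorem not_sequenceable_development [Nontrivial G] {D : Finset (Finset G)}
    (hD : blocksPartition (development D) (univ.erase 0)) :
    ¬ sequenceable (development D) := by
  refine not_sequenceable_of_forall_blocksPartition_erase fun y => ?_
  have himage : (univ.erase (0 : G)).image (· + y) = univ.erase y := by
    rw [image_erase (add_left_injective y), zero_add,
      image_univ_of_surjective (add_right_surjective y)]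
  exact himage ▸ hD.image (add_left_injective y) fun b hb => image_add_right_mem_development hb y

end Development

theorem dev13_eq_development : dev13 = development {{0, 2, 7}, {0, 1, 4}} := rfl

theorem blocksPartition_dev13_erase_zero : blocksPartition dev13 (univ.erase 0) := by
  -- The blocks are `{0,2,7} + 12`, `{0,2,7} + 2`, `{0,1,4} + 7` and `{0,2,7} + 3`.
  refine ⟨{{1, 6, 12}, {2, 4, 9}, {7, 8, 11}, {3, 5, 10}}, by decide, ?_, by decide⟩
  simp only [forall_mem_insert, mem_singleton, forall_eq]
  and_intros <;> decide

theorem stmt3 : ¬ sequenceable dev13 := by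
  have : Fact (1 < 13) := ⟨by decide⟩
  have hpartition := blocksPartition_dev13_erase_zero
  rw [dev13_eq_development] at hpartition ⊢
  exact not_sequenceable_development hpartition
end

section
/- Let n be a positive integer with n ≡ 1 (mod 6) and n ≠ 7. Then there exists a Steiner triple system of order n with the property that for every point x there is an almost parallel class that does not contain x. -/
/-!
Write `n = 6 * t + 1` and argue by strong induction on `t`. If the groups of a group divisible
design with triples as blocks are filled, after adding one common point at infinity, with triple
systems in which every point is missed by an almost parallel class, the result is again such a
system. The group divisible designs needed come from three sources. Bose's construction gives
groups of size 12 in number `t / 2` when `t ≡ 2 (mod 4)`; inflating the translates of `{0, 1, 3}` in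
`ZMod 8` gives four groups of size `6 * (t / 4)` when `4 ∣ t`; and for odd `t = 3 * m + h` with `m`
odd and `h ≤ m`, a transversal design with four groups of size `m`, one of them truncated to `h`
points, is inflated by 6. The orders 13, 19, 25, 31, 43 and 79 not reached in this way are cyclic,
with almost parallel classes made of translates of the base blocks of a difference family.
-/

open Function SimpleGraph

/-- The finite sets in `𝓑` are cliques of `G` with sizes in `K` that partition the edges of `G`.
Steiner triple systems are the case `K = {3}`, `G = ⊤`; pairwise balanced and group divisible
designs are obtained from other `K` and from complete multipartite graphs `G`. -/
structure IsCliqueDecomposition {X : Type*} (K : Set ℕ) (G : SimpleGraph X)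
    (𝓑 : Set (Finset X)) : Prop where
  isClique : ∀ b ∈ 𝓑, G.IsClique (b : Set X)
  card_mem : ∀ b ∈ 𝓑, b.card ∈ K
  existsUnique : ∀ x y, G.Adj x y → ∃! b, b ∈ 𝓑 ∧ x ∈ b ∧ y ∈ b

/-- The edges of `G` can be partitioned into cliques with sizes in `K`. -/
def CliqueDecomposable {X : Type*} (K : Set ℕ) (G : SimpleGraph X) : Prop :=
  ∃ 𝓑, IsCliqueDecomposition K G 𝓑

section Decompositions

variable {X Y ι : Type*} {K : Set ℕ} {G : SimpleGraph X}

theorem IsCliqueDecomposition.map {𝓑 : Set (Finset X)} (h : IsCliqueDecomposition K G 𝓑)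
    (f : X ↪ Y) : IsCliqueDecomposition K (G.map f) (Finset.map f '' 𝓑) where
  isClique := by
    rintro _ ⟨b, hb, rfl⟩
    rw [Finset.coe_map]
    exact (h.isClique b hb).map
  card_mem := by
    rintro _ ⟨b, hb, rfl⟩
    rw [Finset.card_map]
    exact h.card_mem b hb
  existsUnique := by
    rintro _ _ ⟨-, x, y, hxy, rfl, rfl⟩
    obtain ⟨b, ⟨hb, hx, hy⟩, huniq⟩ := h.existsUnique x y hxy
    refine ⟨b.map f, ⟨⟨b, hb, rfl⟩, Finset.mem_map_of_mem f hx, Finset.mem_map_of_mem f hy⟩, ?_⟩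
    rintro _ ⟨⟨b', hb', rfl⟩, hx', hy'⟩
    rw [huniq b' ⟨hb', (Finset.mem_map' f).1 hx', (Finset.mem_map' f).1 hy'⟩]

theorem IsCliqueDecomposition.iUnion {H : ι → SimpleGraph X} {𝓑 : ι → Set (Finset X)}
    (h : ∀ i, IsCliqueDecomposition K (H i) (𝓑 i))
    (hdisj : ∀ i j x y, (H i).Adj x y → (H j).Adj x y → i = j) :
    IsCliqueDecomposition K (⨆ i, H i) (⋃ i, 𝓑 i) where
  isClique b hb := by
    obtain ⟨i, hi⟩ := Set.mem_iUnion.1 hb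
    exact ((h i).isClique b hi).mono (le_iSup H i)
  card_mem b hb := by
    obtain ⟨i, hi⟩ := Set.mem_iUnion.1 hb
    exact (h i).card_mem b hi
  existsUnique x y hxy := by
    obtain ⟨i, hi⟩ := iSup_adj.1 hxy
    obtain ⟨b, ⟨hb, hx, hy⟩, huniq⟩ := (h i).existsUnique x y hi
    refine ⟨b, ⟨Set.mem_iUnion_of_mem i hb, hx, hy⟩, ?_⟩
    rintro b' ⟨hb', hx', hy'⟩
    obtain ⟨j, hj⟩ := Set.mem_iUnion.1 hb'
    obtain rfl := hdisj i j x y hi ((h j).isClique b' hj hx' hy' hxy.ne)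
    exact huniq b' ⟨hj, hx', hy'⟩

theorem CliqueDecomposable.map (h : CliqueDecomposable K G) (f : X ↪ Y) :
    CliqueDecomposable K (G.map f) :=
  let ⟨_, hB⟩ := h
  ⟨_, hB.map f⟩

theorem CliqueDecomposable.iSup {H : ι → SimpleGraph X} (h : ∀ i, CliqueDecomposable K (H i))
    (hdisj : ∀ i j x y, (H i).Adj x y → (H j).Adj x y → i = j) :
    CliqueDecomposable K (⨆ i, H i) := by
  choose 𝓑 h𝓑 using h
  exact ⟨_, .iUnion h𝓑 hdisj⟩

theorem IsCliqueDecomposition.congr {H : SimpleGraph Y} {𝓑 : Set (Finset X)}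
    (h : IsCliqueDecomposition K G 𝓑) (e : G ≃g H) :
    IsCliqueDecomposition K H (Finset.map e.toEquiv.toEmbedding '' 𝓑) := by
  have hmap : G.map e.toEquiv.toEmbedding = H := by
    rw [← G.comap_symm]
    ext x y
    exact e.symm.map_adj_iff
  have := h.map e.toEquiv.toEmbedding
  rwa [hmap] at this

theorem CliqueDecomposable.congr {H : SimpleGraph Y} (h : CliqueDecomposable K G) (e : G ≃g H) :
    CliqueDecomposable K H :=
  let ⟨_, hB⟩ := h
  ⟨_, hB.congr e⟩

theorem cliqueDecomposable_of_thirdPoint (third : X → X → X)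
    (hcomm : ∀ x y, G.Adj x y → third x y = third y x)
    (hadj : ∀ x y, G.Adj x y → G.Adj x (third x y))
    (hinvol : ∀ x y, G.Adj x y → third x (third x y) = y) : CliqueDecomposable {3} G := by
  classical
  have hadj' : ∀ x y, G.Adj x y → G.Adj y (third x y) := fun x y hxy =>
    hcomm x y hxy ▸ hadj y x hxy.symm
  refine ⟨{b | ∃ x y, G.Adj x y ∧ b = {x, y, third x y}}, ?_, ?_, ?_⟩
  · rintro _ ⟨x, y, hxy, rfl⟩
    exact (is3Clique_triple_iff.2 ⟨hxy, hadj x y hxy, hadj' x y hxy⟩).isClique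
  · rintro _ ⟨x, y, hxy, rfl⟩
    exact (is3Clique_triple_iff.2 ⟨hxy, hadj x y hxy, hadj' x y hxy⟩).card_eq
  · intro x y hxy
    refine ⟨{x, y, third x y}, ⟨⟨x, y, hxy, rfl⟩, by simp, by simp⟩, ?_⟩
    rintro _ ⟨⟨u, v, huv, rfl⟩, hx, hy⟩
    have third_vu : third v u = third u v := (hcomm u v huv).symm
    have third_uw : third u (third u v) = v := hinvol u v huv
    have third_wu : third (third u v) u = v := (hcomm u _ (hadj u v huv)).symm.trans third_uw
    have third_vw : third v (third u v) = u := third_vu ▸ hinvol v u huv.symm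
    have third_wv : third (third u v) v = u := (hcomm v _ (hadj' u v huv)).symm.trans third_vw
    have hne := hxy.ne
    simp only [Finset.mem_insert, Finset.mem_singleton] at hx hy
    grind

end Decompositions

/-- Wilson's fundamental construction with constant weight `w`. -/
theorem CliqueDecomposable.comap_fst {X : Type*} {G : SimpleGraph X} {K L : Set ℕ} {w : ℕ}
    (hG : CliqueDecomposable K G)
    (hK : ∀ k ∈ K, CliqueDecomposable L (completeEquipartiteGraph k w)) :
    CliqueDecomposable L (G.comap (Prod.fst : X × Fin w → X)) := by
  obtain ⟨𝓑, h𝓑⟩ := hG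
  let incl (b : 𝓑) : Fin b.1.card × Fin w ↪ X × Fin w :=
    (b.1.equivFin.symm.toEmbedding.trans (.subtype _)).prodMap (.refl _)
  have incl_adj (b : 𝓑) (p q : X × Fin w) :
      ((completeEquipartiteGraph b.1.card w).map (incl b)).Adj p q ↔
        p.1 ≠ q.1 ∧ p.1 ∈ b.1 ∧ q.1 ∈ b.1 := by
    constructor
    · rintro ⟨-, ⟨i, a⟩, ⟨j, c⟩, hij, rfl, rfl⟩
      have : i ≠ j := hij
      simpa [incl, Subtype.ext_iff] using this
    · rintro ⟨hne, hp, hq⟩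
      refine (map_adj ..).2
        ⟨(b.1.equivFin ⟨p.1, hp⟩, p.2), (b.1.equivFin ⟨q.1, hq⟩, q.2), ?_, ?_, ?_⟩
      · simpa using hne
      · simp [incl]
      · simp [incl]
  have hsup : ⨆ b, (completeEquipartiteGraph b.1.card w).map (incl b) = G.comap Prod.fst := by
    ext p q
    simp only [iSup_adj, incl_adj, comap_adj]
    constructor
    · rintro ⟨b, hne, hp, hq⟩
      exact h𝓑.isClique b b.2 hp hq hne
    · intro hpq
      obtain ⟨b, ⟨hb, hp, hq⟩, -⟩ := h𝓑.existsUnique _ _ hpq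
      exact ⟨⟨b, hb⟩, hpq.ne, hp, hq⟩
  rw [← hsup]
  refine .iSup (fun b => (hK _ (h𝓑.card_mem b b.2)).map (incl b)) fun b c p q hb hc => ?_
  obtain ⟨hne, hpb, hqb⟩ := (incl_adj b p q).1 hb
  obtain ⟨-, hpc, hqc⟩ := (incl_adj c p q).1 hc
  have hpq := h𝓑.isClique b b.2 hpb hqb hne
  exact Subtype.ext ((h𝓑.existsUnique _ _ hpq).unique ⟨b.2, hpb, hqb⟩ ⟨c.2, hpc, hqc⟩)

theorem CliqueDecomposable.completeMultipartiteGraph_prod {ι : Type*} {V : ι → Type*} {K L : Set ℕ}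
    {w : ℕ} (hV : CliqueDecomposable K (completeMultipartiteGraph V))
    (hK : ∀ k ∈ K, CliqueDecomposable L (completeEquipartiteGraph k w)) :
    CliqueDecomposable L (completeMultipartiteGraph fun i => V i × Fin w) :=
  (hV.comap_fst hK).congr { Equiv.sigmaProdDistrib V (Fin w) with map_rel_iff' := Iff.rfl }

theorem cliqueDecomposable_completeEquipartiteGraph_of_comap_fst {R W : Type*} [Fintype R]
    [Fintype W] {K : Set ℕ} {r w : ℕ} (hR : Fintype.card R = r) (hW : Fintype.card W = w)
    (h : CliqueDecomposable K ((⊤ : SimpleGraph R).comap (Prod.fst : R × W → R))) :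
    CliqueDecomposable K (completeEquipartiteGraph r w) :=
  h.congr
    { (Fintype.equivFinOfCardEq hR).prodCongr (Fintype.equivFinOfCardEq hW) with
      map_rel_iff' := by simp }

theorem cliqueDecomposable_completeEquipartiteGraph_three (w : ℕ) [NeZero w] :
    CliqueDecomposable {3} (completeEquipartiteGraph 3 w) := by
  refine cliqueDecomposable_completeEquipartiteGraph_of_comap_fst (ZMod.card 3) (ZMod.card w)
    (cliqueDecomposable_of_thirdPoint (fun p q => -p - q) ?_ ?_ ?_)
  · intro p q _
    abel
  · rintro ⟨i, a⟩ ⟨j, b⟩ (hij : i ≠ j)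
    change i ≠ -i - j
    revert i j
    decide
  · intro p q _
    abel

theorem CliqueDecomposable.completeEquipartiteGraph_mul {r s : ℕ}
    (h : CliqueDecomposable {3} (completeEquipartiteGraph r s)) (w : ℕ) [NeZero w] :
    CliqueDecomposable {3} (completeEquipartiteGraph r (s * w)) := by
  have hblowup : CliqueDecomposable {3} ((completeEquipartiteGraph r s).comap
      (Prod.fst : (Fin r × Fin s) × Fin w → Fin r × Fin s)) :=
    h.comap_fst fun k hk => hk ▸ cliqueDecomposable_completeEquipartiteGraph_three w
  exact cliqueDecomposable_completeEquipartiteGraph_of_comap_fst (W := Fin s × Fin w)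
    (Fintype.card_fin r) (by simp)
    (hblowup.congr { Equiv.prodAssoc .. with map_rel_iff' := Iff.rfl })

theorem cliqueDecomposable_completeEquipartiteGraph_four_two :
    CliqueDecomposable {3} (completeEquipartiteGraph 4 2) := by
  -- The triples are the translates of `{0, 1, 3}` in `ZMod 8`; the parts are cosets of `{0, 4}`.
  let G : SimpleGraph (ZMod 8) := (⊤ : SimpleGraph (Fin 4)).comap (Fin.ofNat 4 ·.val)
  have hG : CliqueDecomposable {3} G :=
    cliqueDecomposable_of_thirdPoint (fun x y => x + ![0, 3, 7, 1, 0, 6, 5, 2] (y - x))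
      (by decide) (by decide) (by decide)
  let e : ZMod 8 ≃ Fin 4 × Fin 2 := (finProdFinEquiv (m := 2) (n := 4)).symm.trans (.prodComm ..)
  exact hG.congr { e with map_rel_iff' := by decide }

/-- Bose's construction: besides `{x} × ZMod 3`, which is a part here, its triples are
`{(x, i), (y, i), ((x + y) / 2, i + 1)}` with `x ≠ y`. -/
theorem cliqueDecomposable_comap_fst_zmod_three {R : Type*} [CommRing R] (h2 : IsUnit (2 : R)) :
    CliqueDecomposable {3} ((⊤ : SimpleGraph R).comap (Prod.fst : R × ZMod 3 → R)) := by
  have := h2.invertible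
  let third (p q : R × ZMod 3) : R × ZMod 3 :=
    if p.2 = q.2 then (⅟2 * (p.1 + q.1), p.2 + 1)
    else if q.2 = p.2 + 1 then (2 * q.1 - p.1, p.2)
    else (2 * p.1 - q.1, q.2)
  have third_level (x y : R) (i : ZMod 3) : third (x, i) (y, i) = (⅟2 * (x + y), i + 1) := by
    simp [third]
  have third_up (x y : R) (i : ZMod 3) : third (x, i) (y, i + 1) = (2 * y - x, i) := by
    simp [third]
  have third_down (x y : R) (i : ZMod 3) : third (x, i + 1) (y, i) = (2 * x - y, i) := by
    have : i ≠ i + 1 + 1 := by decide +revert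
    simp [third, this]
  have level_cases : ∀ i j : ZMod 3, i = j ∨ j = i + 1 ∨ i = j + 1 := by decide
  have two_half : (2 : R) * ⅟2 = 1 := mul_invOf_self 2
  refine cliqueDecomposable_of_thirdPoint third ?_ ?_ ?_
  · rintro ⟨x, i⟩ ⟨y, j⟩ -
    obtain rfl | rfl | rfl := level_cases i j
    · rw [third_level, third_level, add_comm x y]
    · rw [third_up, third_down]
    · rw [third_down, third_up]
  · rintro ⟨x, i⟩ ⟨y, j⟩ (hxy : x ≠ y) (heq : x = _)
    refine hxy ?_
    obtain rfl | rfl | rfl := level_cases i j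
    · rw [third_level] at heq
      linear_combination 2 * heq + (x + y) * two_half
    · rw [third_up] at heq
      linear_combination ⅟2 * heq - (x - y) * two_half
    · rw [third_down] at heq
      linear_combination -heq
  · rintro ⟨x, i⟩ ⟨y, j⟩ -
    obtain rfl | rfl | rfl := level_cases i j
    · rw [third_level, third_up, ← mul_assoc, two_half, one_mul, add_sub_cancel_left]
    · rw [third_up, third_level, add_sub_cancel, ← mul_assoc, invOf_mul_self, one_mul]
    · rw [third_down, third_down, sub_sub_cancel]

theorem isUnit_two_zmod_of_odd {u : ℕ} (hu : Odd u) : IsUnit (2 : ZMod u) := by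
  exact_mod_cast (ZMod.isUnit_iff_coprime 2 u).2 (Nat.coprime_two_left.2 hu)

theorem cliqueDecomposable_completeEquipartiteGraph_three_mul_of_odd {u : ℕ} (hu : Odd u) (w : ℕ)
    [NeZero w] : CliqueDecomposable {3} (completeEquipartiteGraph u (3 * w)) := by
  have : NeZero u := ⟨hu.pos.ne'⟩
  have hbose : CliqueDecomposable {3} (completeEquipartiteGraph u 3) :=
    cliqueDecomposable_completeEquipartiteGraph_of_comap_fst (ZMod.card u) (ZMod.card 3)
      (cliqueDecomposable_comap_fst_zmod_three (isUnit_two_zmod_of_odd hu))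
  exact hbose.completeEquipartiteGraph_mul w

/-- An orthogonal array of strength two and index one, with rows indexed by `Λ`, columns by `J` and
entries in `R`. It encodes a transversal design whose groups are copies of `R`. -/
def IsOrthogonalArray {Λ J R : Type*} (L : Λ → J → R) : Prop :=
  ∀ j k, j ≠ k → Bijective fun l => (L l j, L l k)

/-- Truncating the `j`-th group of the transversal design to the points of `S j`. -/
theorem IsOrthogonalArray.cliqueDecomposable {Λ J R : Type*} [Fintype J] [DecidableEq R]
    {K : Set ℕ} {L : Λ → J → R} (hL : IsOrthogonalArray L) (S : J → Finset R)
    (hK : ∀ l, Finset.card {j | L l j ∈ S j} ∈ K) :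
    CliqueDecomposable K (completeMultipartiteGraph fun j => S j) := by
  let block (l : Λ) : Finset (Σ j, S j) := (Finset.univ : Finset {j // L l j ∈ S j}).map
    ⟨fun j => ⟨j.1, L l j.1, j.2⟩, fun j k h => Subtype.ext (congrArg Sigma.fst h)⟩
  have mem_block (l : Λ) (p : Σ j, S j) : p ∈ block l ↔ L l p.1 = p.2 := by
    obtain ⟨j, r, hr⟩ := p
    simp only [block, Finset.mem_map, Finset.mem_univ, true_and]
    constructor
    · rintro ⟨_, ⟨⟩⟩
      rfl
    · rintro rfl
      exact ⟨⟨j, hr⟩, rfl⟩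
  refine ⟨Set.range block, ?_, ?_, ?_⟩
  · rintro _ ⟨l, rfl⟩ ⟨j, r⟩ hp ⟨k, s⟩ hq hne (rfl : j = k)
    have hr := (mem_block l _).1 hp
    have hs := (mem_block l _).1 hq
    exact hne (congrArg _ (Subtype.ext (hr.symm.trans hs)))
  · rintro _ ⟨l, rfl⟩
    simpa [block, Fintype.card_subtype] using hK l
  · intro p q hpq
    obtain ⟨l, hl⟩ := (hL p.1 q.1 hpq).2 (p.2, q.2)
    obtain ⟨hp, hq⟩ := Prod.ext_iff.1 hl
    refine ⟨block l, ⟨⟨l, rfl⟩, (mem_block l p).2 hp, (mem_block l q).2 hq⟩, ?_⟩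
    rintro _ ⟨⟨l', rfl⟩, hp', hq'⟩
    refine congrArg block ((hL p.1 q.1 hpq).1 (Prod.ext ?_ ?_))
    · exact ((mem_block l' p).1 hp').trans hp.symm
    · exact ((mem_block l' q).1 hq').trans hq.symm

theorem isOrthogonalArray_add_sub {R : Type*} [CommRing R] [Finite R] (h2 : IsUnit (2 : R)) :
    IsOrthogonalArray fun (p : R × R) => ![p.1, p.2, p.1 + p.2, p.1 - p.2] := by
  intro j k hjk
  refine Injective.bijective_of_finite ?_
  rintro ⟨x, y⟩ ⟨x', y'⟩ h
  have eq_of_add_of_sub (hadd : x + y = x' + y') (hsub : x - y = x' - y') : x = x' :=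
    h2.mul_left_cancel (by linear_combination hadd + hsub)
  fin_cases j <;> fin_cases k <;> simp at hjk h ⊢ <;> grind

theorem cliqueDecomposable_truncated_completeMultipartiteGraph {R : Type*} [CommRing R] [Fintype R]
    (h2 : IsUnit (2 : R)) (H : Finset R) :
    CliqueDecomposable {3, 4}
      (completeMultipartiteGraph fun j : Fin 4 => (![.univ, .univ, .univ, H] j : Finset R)) := by
  classical
  refine (isOrthogonalArray_add_sub h2).cliqueDecomposable _ fun p => ?_
  rw [Finset.card_filter, Fin.sum_univ_four]
  by_cases hH : p.1 - p.2 ∈ H <;> simp [hH]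

/-- The blocks in `𝓐` partition the point set `S`. An almost parallel class missing exactly the
point `p` is the case `S = {p}ᶜ`. -/
structure IsBlockPartition {X : Type*} (𝓐 : Set (Finset X)) (S : Set X) : Prop where
  subset : ∀ b ∈ 𝓐, (b : Set X) ⊆ S
  existsUnique : ∀ x ∈ S, ∃! b, b ∈ 𝓐 ∧ x ∈ b

theorem IsBlockPartition.map {X Y : Type*} {𝓐 : Set (Finset X)} {S : Set X}
    (h : IsBlockPartition 𝓐 S) (f : X ↪ Y) : IsBlockPartition (Finset.map f '' 𝓐) (f '' S) where
  subset := by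
    rintro _ ⟨b, hb, rfl⟩
    rw [Finset.coe_map]
    exact Set.image_mono (h.subset b hb)
  existsUnique := by
    rintro _ ⟨x, hx, rfl⟩
    obtain ⟨b, ⟨hb, hxb⟩, huniq⟩ := h.existsUnique x hx
    refine ⟨b.map f, ⟨⟨b, hb, rfl⟩, Finset.mem_map_of_mem f hxb⟩, ?_⟩
    rintro _ ⟨⟨b', hb', rfl⟩, hx'⟩
    rw [huniq b' ⟨hb', (Finset.mem_map' f).1 hx'⟩]

theorem IsBlockPartition.iUnion {X ι : Type*} {𝓐 : ι → Set (Finset X)} {S : ι → Set X}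
    (h : ∀ i, IsBlockPartition (𝓐 i) (S i)) (hS : ∀ i j x, x ∈ S i → x ∈ S j → i = j) :
    IsBlockPartition (⋃ i, 𝓐 i) (⋃ i, S i) where
  subset b hb := by
    obtain ⟨i, hi⟩ := Set.mem_iUnion.1 hb
    exact ((h i).subset b hi).trans (Set.subset_iUnion S i)
  existsUnique x hx := by
    obtain ⟨i, hi⟩ := Set.mem_iUnion.1 hx
    obtain ⟨b, ⟨hb, hxb⟩, huniq⟩ := (h i).existsUnique x hi
    refine ⟨b, ⟨Set.mem_iUnion_of_mem i hb, hxb⟩, ?_⟩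
    rintro b' ⟨hb', hx'⟩
    obtain ⟨j, hj⟩ := Set.mem_iUnion.1 hb'
    obtain rfl := hS i j x hi ((h j).subset b' hj hx')
    exact huniq b' ⟨hj, hx'⟩

theorem map_top_adj {X Y : Type*} (f : X ↪ Y) {x y : Y} :
    ((⊤ : SimpleGraph X).map f).Adj x y ↔ x ≠ y ∧ x ∈ Set.range f ∧ y ∈ Set.range f := by
  constructor
  · rintro ⟨hne, a, b, -, rfl, rfl⟩
    exact ⟨hne, ⟨a, rfl⟩, ⟨b, rfl⟩⟩
  · rintro ⟨hne, ⟨a, rfl⟩, ⟨b, rfl⟩⟩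
    exact ⟨hne, a, b, f.injective.ne_iff.1 hne, rfl, rfl⟩

/-- There is a Steiner triple system on `X` such that every point is the one missed by some almost
parallel class. -/
def HasPointAvoidingSTS (X : Type*) : Prop :=
  ∃ 𝓑 : Set (Finset X), IsCliqueDecomposition {3} ⊤ 𝓑 ∧ ∀ p, ∃ 𝓐 ⊆ 𝓑, IsBlockPartition 𝓐 {p}ᶜ

namespace HasPointAvoidingSTS

theorem congr {X Y : Type*} (h : HasPointAvoidingSTS X) (e : X ≃ Y) : HasPointAvoidingSTS Y := by
  obtain ⟨𝓑, h𝓑, hparallel⟩ := h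
  refine ⟨_, h𝓑.congr (Iso.completeGraph e), fun p => ?_⟩
  obtain ⟨𝓐, h𝓐, hpart⟩ := hparallel (e.symm p)
  refine ⟨_, Set.image_mono h𝓐, ?_⟩
  have hcompl : e.toEmbedding '' {e.symm p}ᶜ = {p}ᶜ := by
    ext
    simp
  exact hcompl ▸ hpart.map e.toEmbedding

theorem congr_card {X Y : Type*} [Fintype X] [Fintype Y] (h : HasPointAvoidingSTS X)
    (hcard : Fintype.card X = Fintype.card Y) : HasPointAvoidingSTS Y :=
  h.congr (Fintype.equivOfCardEq hcard)

theorem of_subsingleton (X : Type*) [Subsingleton X] : HasPointAvoidingSTS X :=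
  ⟨∅, ⟨by simp, by simp, fun x y h => (h.ne (Subsingleton.elim x y)).elim⟩,
    fun p => ⟨∅, subset_rfl, ⟨by simp, fun x hx => (hx (Subsingleton.elim x p)).elim⟩⟩⟩

section Fill

variable {ι : Type*} {V : ι → Type*}

/-- The inclusion of the `i`-th part, extended by the common point at infinity `none`. -/
def partWithInfinity (V : ι → Type*) (i : ι) : Option (V i) ↪ Option (Σ i, V i) :=
  (Embedding.sigmaMk i).optionMap

theorem mem_range_partWithInfinity {i : ι} {x : Option (Σ i, V i)} :
    x ∈ Set.range (partWithInfinity V i) ↔ ∀ z ∈ x, z.1 = i := by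
  constructor
  · rintro ⟨_ | v, rfl⟩ z ⟨⟩
    rfl
  · intro hx
    match x, hx with
    | none, _ => exact ⟨none, rfl⟩
    | some ⟨j, v⟩, hx =>
      obtain rfl : j = i := hx _ rfl
      exact ⟨some v, rfl⟩

/-- The summands of the complete graph on `Option (Σ i, V i)` used to fill in the groups of a group
divisible design: the complete multipartite graph at index `none`, and at index `some i` the clique
on the `i`-th part together with the point at infinity. -/
def fillGraph (V : ι → Type*) : Option ι → SimpleGraph (Option (Σ i, V i))
  | none => (completeMultipartiteGraph V).map Embedding.some
  | some i => (⊤ : SimpleGraph _).map (partWithInfinity V i)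

theorem fillGraph_some_adj {i : ι} {x y : Option (Σ i, V i)} :
    (fillGraph V (some i)).Adj x y ↔ x ≠ y ∧ (∀ z ∈ x, z.1 = i) ∧ ∀ z ∈ y, z.1 = i := by
  rw [fillGraph, map_top_adj, mem_range_partWithInfinity, mem_range_partWithInfinity]

theorem fillGraph_none_adj {x y : Option (Σ i, V i)} :
    (fillGraph V none).Adj x y ↔ ∃ p ∈ x, ∃ q ∈ y, p.1 ≠ q.1 := by
  rw [fillGraph, map_adj]
  constructor
  · rintro ⟨p, q, hpq, rfl, rfl⟩
    exact ⟨p, rfl, q, rfl, hpq⟩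
  · rintro ⟨p, hp, q, hq, hpq⟩
    exact ⟨p, q, hpq, hp.symm, hq.symm⟩

theorem iSup_fillGraph : ⨆ i, fillGraph V i = ⊤ := by
  ext x y
  simp only [iSup_adj, Option.exists, fillGraph_none_adj, fillGraph_some_adj, top_adj]
  rcases x with - | ⟨i, x⟩ <;> rcases y with - | ⟨j, y⟩
  · simp
  · simp
  · simp
  · by_cases hij : i = j
    · subst hij
      simp
    · simp [hij]

theorem fillGraph_disjoint : ∀ (i j : Option ι) (x y : Option (Σ i, V i)),
    (fillGraph V i).Adj x y → (fillGraph V j).Adj x y → i = j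
  | none, none => fun _ _ _ _ => rfl
  | none, some i => by
    simp only [fillGraph_none_adj, fillGraph_some_adj]
    grind
  | some i, none => by
    simp only [fillGraph_none_adj, fillGraph_some_adj]
    grind
  | some i, some j => by
    simp only [fillGraph_some_adj, Option.some_inj]
    rintro (_ | x) (_ | y) ⟨hne, hxi, hyi⟩ ⟨-, hxj, hyj⟩
    · exact (hne rfl).elim
    · exact (hyi y rfl).symm.trans (hyj y rfl)
    all_goals exact (hxi x rfl).symm.trans (hxj x rfl)

theorem iUnion_image_compl_partWithInfinity {k : ι} {v : ∀ i, Option (V i)}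
    (hv : ∀ i, i ≠ k → v i = none) :
    ⋃ i, partWithInfinity V i '' {v i}ᶜ = {partWithInfinity V k (v k)}ᶜ := by
  ext x
  simp only [Set.mem_iUnion, Set.mem_image, Set.mem_compl_singleton_iff]
  constructor
  · rintro ⟨i, u, hu, rfl⟩ heq
    have hik : i ≠ k := by
      rintro rfl
      exact hu ((partWithInfinity V i).injective heq)
    obtain ⟨a, rfl⟩ := Option.ne_none_iff_exists'.1 (hv i hik ▸ hu)
    exact hik (mem_range_partWithInfinity.1 ⟨v k, heq.symm⟩ _ rfl)
  · intro hx
    rcases x with - | ⟨i, a⟩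
    · exact ⟨k, none, fun h => hx (by rw [← h]; rfl), rfl⟩
    · refine ⟨i, some a, fun h => hx ?_, rfl⟩
      obtain rfl : i = k := by_contra fun hik => by simp [hv i hik] at h
      rw [← h]
      rfl

theorem isBlockPartition_fill {k : ι} {v : ∀ i, Option (V i)} (hv : ∀ i, i ≠ k → v i = none)
    {𝓐 : ∀ i, Set (Finset (Option (V i)))} (h𝓐 : ∀ i, IsBlockPartition (𝓐 i) {v i}ᶜ) :
    IsBlockPartition (⋃ i, Finset.map (partWithInfinity V i) '' 𝓐 i)
      {partWithInfinity V k (v k)}ᶜ := by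
  rw [← iUnion_image_compl_partWithInfinity hv]
  refine .iUnion (fun i => (h𝓐 i).map _) ?_
  rintro i j _ ⟨u, hu, rfl⟩ ⟨u', hu', heq⟩
  rcases u with - | a <;> rcases u' with - | b <;> cases heq
  · have hi : i = k := by_contra fun hi => hu (hv i hi).symm
    have hj : j = k := by_contra fun hj => hu' (hv j hj).symm
    exact hi.trans hj.symm
  · rfl

/-- The group containing `p` contributes a class missing `p`, every other group one missing the
point at infinity; together these cover everything but `p` exactly once. -/
theorem fill [Nonempty ι] (hV : CliqueDecomposable {3} (completeMultipartiteGraph V))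
    (hparts : ∀ i, HasPointAvoidingSTS (Option (V i))) :
    HasPointAvoidingSTS (Option (Σ i, V i)) := by
  classical
  obtain ⟨𝓒, h𝓒⟩ := hV
  choose 𝓑 h𝓑 𝓐 h𝓐 hpart using hparts
  let blocks : Option ι → Set (Finset (Option (Σ i, V i)))
    | none => Finset.map .some '' 𝓒
    | some i => Finset.map (partWithInfinity V i) '' 𝓑 i
  have hblocks : ∀ i, IsCliqueDecomposition {3} (fillGraph V i) (blocks i)
    | none => h𝓒.map _
    | some i => (h𝓑 i).map _
  have hdecomp := IsCliqueDecomposition.iUnion hblocks fillGraph_disjoint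
  refine ⟨_, iSup_fillGraph ▸ hdecomp, fun p => ?_⟩
  obtain ⟨k, p, rfl⟩ : ∃ k, ∃ v, partWithInfinity V k v = p :=
    match p with
    | none => ⟨Classical.arbitrary ι, none, rfl⟩
    | some ⟨k, v⟩ => ⟨k, some v, rfl⟩
  let avoided : ∀ i, Option (V i) := update (fun _ => none) k p
  have havoided : avoided k = p := update_self ..
  refine ⟨⋃ i, Finset.map (partWithInfinity V i) '' 𝓐 i (avoided i),
    Set.iUnion_subset fun i => ?_, ?_⟩
  · exact (Set.image_mono (h𝓐 i _)).trans (Set.subset_iUnion blocks (some i))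
  · rw [← havoided]
    exact isBlockPartition_fill (v := avoided) (fun i hik => update_of_ne hik ..)
      fun i => hpart i _

end Fill

theorem fill_equipartite {r w : ℕ} [NeZero r]
    (hr : CliqueDecomposable {3} (completeEquipartiteGraph r w))
    (hw : HasPointAvoidingSTS (Fin (w + 1))) : HasPointAvoidingSTS (Fin (r * w + 1)) := by
  have hfill : HasPointAvoidingSTS (Option (Σ _ : Fin r, Fin w)) :=
    fill (hr.congr completeEquipartiteGraph.completeMultipartiteGraph)
      fun _ => hw.congr_card (by simp)
  exact hfill.congr_card (by simp)

theorem three_mul_add {m h : ℕ} (hm : Odd m) (hhm : h ≤ m)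
    (hasSTS_m : HasPointAvoidingSTS (Fin (6 * m + 1)))
    (hasSTS_h : HasPointAvoidingSTS (Fin (6 * h + 1))) :
    HasPointAvoidingSTS (Fin (6 * (3 * m + h) + 1)) := by
  have : NeZero m := ⟨hm.pos.ne'⟩
  obtain ⟨H, -, hH⟩ := Finset.exists_subset_card_eq (s := (Finset.univ : Finset (ZMod m)))
    (n := h) (by simpa [ZMod.card] using hhm)
  let S : Fin 4 → Finset (ZMod m) := ![.univ, .univ, .univ, H]
  have hS : CliqueDecomposable {3, 4} (completeMultipartiteGraph fun j => S j) :=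
    cliqueDecomposable_truncated_completeMultipartiteGraph (isUnit_two_zmod_of_odd hm) H
  have hS6 : CliqueDecomposable {3} (completeMultipartiteGraph fun j => S j × Fin 6) := by
    refine hS.completeMultipartiteGraph_prod ?_
    rintro k (rfl | rfl)
    · exact cliqueDecomposable_completeEquipartiteGraph_three 6
    · exact cliqueDecomposable_completeEquipartiteGraph_four_two.completeEquipartiteGraph_mul 3
  have hpart {j : Fin 4} {n : ℕ} (hn : (S j).card = n)
      (hasSTS_n : HasPointAvoidingSTS (Fin (6 * n + 1))) :
      HasPointAvoidingSTS (Option (S j × Fin 6)) :=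
    hasSTS_n.congr_card (by simp [hn, mul_comm])
  have hfill : HasPointAvoidingSTS (Option (Σ j, S j × Fin 6)) := fill hS6 fun j =>
    match j with
    | 0 | 1 | 2 => hpart (ZMod.card m) hasSTS_m
    | 3 => hpart hH hasSTS_h
  have hsum : ∑ j, (S j).card = 3 * m + h :=
    calc
      ∑ j, (S j).card = m + m + m + h := by simp [Fin.sum_univ_four, S, hH, ZMod.card]
      _ = 3 * m + h := by ring
  exact hfill.congr_card (by simp [← Finset.sum_mul, hsum, mul_comm])

end HasPointAvoidingSTS

section DifferenceFamilies

variable {ι κ G : Type*} [AddCommGroup G]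

/-- Every nonzero element of `G` is a difference of two members of exactly one of the base blocks
`D i`, in exactly one way. Taking `k' = j'` in `unique` shows that each base block has distinct
members; uniqueness is spelled out so that it can be decided. -/
structure IsDifferenceFamily (D : ι → κ → G) : Prop where
  exists_sub_eq : ∀ d, d ≠ 0 → ∃ i j k, D i j - D i k = d
  unique : ∀ i j k i' j' k', j ≠ k → D i j - D i k = D i' j' - D i' k' → i = i' ∧ j = j' ∧ k = k'

/-- The block obtained from the base block `B` by adding `g` to all its members. -/
def translatedBlock [Fintype κ] [DecidableEq G] (B : κ → G) (g : G) : Finset G :=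
  Finset.univ.image (B · + g)

theorem mem_translatedBlock [Fintype κ] [DecidableEq G] {B : κ → G} {g x : G} :
    x ∈ translatedBlock B g ↔ ∃ j, B j + g = x := by
  simp [translatedBlock]

variable {D : ι → κ → G}

theorem IsDifferenceFamily.injective (hD : IsDifferenceFamily D) (i : ι) : Injective (D i) := by
  intro j k hjk
  by_contra hne
  exact hne (hD.unique i j k i j j hne (by rw [hjk])).2.2.symm

theorem IsDifferenceFamily.isCliqueDecomposition [Fintype κ] [DecidableEq G]
    (hD : IsDifferenceFamily D) : IsCliqueDecomposition {Fintype.card κ} (⊤ : SimpleGraph G)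
      {b | ∃ i g, b = translatedBlock (D i) g} where
  isClique _ _ _ _ _ _ hne := hne
  card_mem := by
    rintro _ ⟨i, g, rfl⟩
    exact Finset.card_image_of_injective _ ((add_left_injective g).comp (hD.injective i))
  existsUnique := by
    intro x y (hxy : x ≠ y)
    obtain ⟨i, j, k, hijk⟩ := hD.exists_sub_eq (x - y) (sub_ne_zero.2 hxy)
    have hjk : j ≠ k := by
      rintro rfl
      rw [sub_self] at hijk
      exact hxy (sub_eq_zero.1 hijk.symm)
    refine ⟨translatedBlock (D i) (x - D i j), ⟨⟨i, _, rfl⟩, mem_translatedBlock.2 ⟨j, by abel⟩,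
      mem_translatedBlock.2 ⟨k, ?_⟩⟩, ?_⟩
    · rw [← sub_sub_cancel x y, ← hijk]
      abel
    · rintro _ ⟨⟨i', g, rfl⟩, hx, hy⟩
      obtain ⟨j', rfl⟩ := mem_translatedBlock.1 hx
      obtain ⟨k', rfl⟩ := mem_translatedBlock.1 hy
      obtain ⟨rfl, rfl, rfl⟩ :=
        hD.unique i j k i' j' k' hjk (by rw [hijk, add_sub_add_right_eq_sub])
      rw [add_sub_cancel_left]

theorem HasPointAvoidingSTS.of_differenceFamily {α : Type*} {D : ι → Fin 3 → G}
    (hD : IsDifferenceFamily D) (base : α → ι) (shift : α → G)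
    (hinj : Injective fun t : α × Fin 3 => D (base t.1) t.2 + shift t.1)
    (hrange : ∀ x, (∃ r j, D (base r) j + shift r = x) ↔ x ≠ 0) : HasPointAvoidingSTS G := by
  classical
  refine ⟨_, hD.isCliqueDecomposition, fun p =>
    ⟨Set.range fun r => translatedBlock (D (base r)) (shift r + p), ?_, ?_, ?_⟩⟩
  · rintro _ ⟨r, rfl⟩
    exact ⟨base r, _, rfl⟩
  · rintro _ ⟨r, rfl⟩ x hx (rfl : x = p)
    obtain ⟨j, hj⟩ := mem_translatedBlock.1 hx
    exact (hrange _).1 ⟨r, j, rfl⟩ (by simpa [← add_assoc] using hj)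
  · intro x (hx : x ≠ p)
    obtain ⟨r, j, hrj⟩ := (hrange (x - p)).2 (sub_ne_zero.2 hx)
    refine ⟨translatedBlock (D (base r)) (shift r + p),
      ⟨⟨r, rfl⟩, mem_translatedBlock.2 ⟨j, ?_⟩⟩, ?_⟩
    · rw [← add_assoc, hrj, sub_add_cancel]
    · rintro _ ⟨⟨r', rfl⟩, hx'⟩
      obtain ⟨j', hj'⟩ := mem_translatedBlock.1 hx'
      have heq : D (base r') j' + shift r' = D (base r) j + shift r := by
        rw [hrj, ← hj', ← add_assoc, add_sub_cancel_right]
      obtain ⟨rfl, -⟩ := Prod.mk.inj (hinj heq : (r', j') = (r, j))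
      rfl

end DifferenceFamilies

theorem hasPointAvoidingSTS_thirteen : HasPointAvoidingSTS (Fin 13) :=
  .of_differenceFamily (G := ZMod 13) (D := ![![1, 7, 12], ![2, 5, 6]])
    ⟨by decide +kernel, by decide +kernel⟩ ![0, 0, 0, 1] ![0, 9, 10, 0]
    (by decide +kernel) (by decide +kernel)

theorem hasPointAvoidingSTS_twentyFive : HasPointAvoidingSTS (Fin 25) :=
  .of_differenceFamily (G := ZMod 25)
    (D := ![![1, 2, 4], ![3, 13, 22], ![5, 9, 23], ![6, 11, 19]])
    ⟨by decide +kernel, by decide +kernel⟩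
    (Prod.fst : Fin 4 × Fin 2 → Fin 4) (fun r => ![0, ![14, 11, 12, 1] r.1] r.2)
    (by decide +kernel) (by decide +kernel)

/-- In a field of order `6 * t + 1` with `g` a unit of order `t`, the members of `B` and `B + s`
represent the six cosets of the powers of `g`, and so do the differences of members of `B`. -/
theorem HasPointAvoidingSTS.of_geometric_differenceFamily {R : Type*} [CommRing R] {t : ℕ}
    {g s : R} {B : Fin 3 → R} (hD : IsDifferenceFamily fun (i : Fin t) j => g ^ (i : ℕ) * B j)
    (hinj : Injective fun r : (Fin t × Fin 2) × Fin 3 =>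
      g ^ (r.1.1 : ℕ) * (B r.2 + ![0, s] r.1.2))
    (hrange : ∀ x, (∃ (r : Fin t × Fin 2) (j : Fin 3), g ^ (r.1 : ℕ) * (B j + ![0, s] r.2) = x) ↔
      x ≠ 0) : HasPointAvoidingSTS R := by
  simp only [mul_add] at hinj hrange
  exact of_differenceFamily hD Prod.fst _ hinj hrange

theorem hasPointAvoidingSTS_nineteen : HasPointAvoidingSTS (Fin 19) :=
  .of_geometric_differenceFamily (R := ZMod 19) (t := 3) (g := 7) (B := ![1, 2, 6]) (s := 11)
    ⟨by decide +kernel, by decide +kernel⟩ (by decide +kernel) (by decide +kernel)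

theorem hasPointAvoidingSTS_thirtyOne : HasPointAvoidingSTS (Fin 31) :=
  .of_geometric_differenceFamily (R := ZMod 31) (t := 5) (g := 2) (B := ![1, 3, 13]) (s := 27)
    ⟨by decide +kernel, by decide +kernel⟩ (by decide +kernel) (by decide +kernel)

theorem hasPointAvoidingSTS_fortyThree : HasPointAvoidingSTS (Fin 43) :=
  .of_geometric_differenceFamily (R := ZMod 43) (t := 7) (g := 4) (B := ![1, 2, 14]) (s := 4)
    ⟨by decide +kernel, by decide +kernel⟩ (by decide +kernel) (by decide +kernel)

theorem hasPointAvoidingSTS_seventyNine : HasPointAvoidingSTS (Fin 79) :=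
  .of_geometric_differenceFamily (R := ZMod 79) (t := 13) (g := 8) (B := ![1, 2, 5]) (s := 28)
    ⟨by decide +kernel, by decide +kernel⟩ (by decide +kernel) (by decide +kernel)

theorem HasPointAvoidingSTS.four_mul {k : ℕ} [NeZero k]
    (hk : HasPointAvoidingSTS (Fin (6 * k + 1))) : HasPointAvoidingSTS (Fin (6 * (4 * k) + 1)) := by
  have hK4 : CliqueDecomposable {3} (completeEquipartiteGraph 4 (2 * (3 * k))) :=
    cliqueDecomposable_completeEquipartiteGraph_four_two.completeEquipartiteGraph_mul (3 * k)
  have hfill := fill_equipartite hK4 (hk.congr_card (by simp; ring))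
  exact hfill.congr_card (by simp; ring)

theorem hasPointAvoidingSTS_two_mul_of_odd {u : ℕ} (hu : Odd u) :
    HasPointAvoidingSTS (Fin (6 * (2 * u) + 1)) := by
  have : NeZero u := ⟨hu.pos.ne'⟩
  have hfill := hasPointAvoidingSTS_thirteen.fill_equipartite
    (cliqueDecomposable_completeEquipartiteGraph_three_mul_of_odd hu 4)
  exact hfill.congr_card (by simp; ring)

theorem exists_eq_three_mul_add_of_odd {t : ℕ} (ht : Odd t) (h9 : 9 ≤ t) (h13 : t ≠ 13) :
    ∃ m h, Odd m ∧ m ≠ 1 ∧ h ≤ m ∧ h ≠ 1 ∧ t = 3 * m + h := by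
  obtain ⟨s, rfl⟩ := ht
  obtain hs | hs | hs : s % 3 = 0 ∨ s % 3 = 1 ∨ s % 3 = 2 := by omega
  · exact ⟨2 * (s / 3) - 1, 4, ⟨s / 3 - 1, by omega⟩, by omega⟩
  · exact ⟨2 * (s / 3) + 1, 0, ⟨s / 3, by omega⟩, by omega⟩
  · exact ⟨2 * (s / 3) + 1, 2, ⟨s / 3, by omega⟩, by omega⟩

theorem hasPointAvoidingSTS_six_mul_add_one (t : ℕ) (ht : t ≠ 1) :
    HasPointAvoidingSTS (Fin (6 * t + 1)) := by
  induction t using Nat.strong_induction_on with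
  | _ t ih =>
    rcases Nat.even_or_odd' t with ⟨u, rfl | htu⟩
    · rcases Nat.even_or_odd' u with ⟨k, rfl | rfl⟩
      · rw [show 2 * (2 * k) = 4 * k by ring]
        match k with
        | 0 => exact .of_subsingleton (Fin 1)
        | 1 => exact hasPointAvoidingSTS_twentyFive
        | k + 2 => exact (ih (k + 2) (by omega) (by omega)).four_mul
      · exact hasPointAvoidingSTS_two_mul_of_odd ⟨k, rfl⟩
    · by_cases hstep : 9 ≤ t ∧ t ≠ 13
      · obtain ⟨m, h, hm, hm1, hhm, hh1, rfl⟩ :=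
          exists_eq_three_mul_add_of_odd ⟨u, htu⟩ hstep.1 hstep.2
        exact .three_mul_add hm hhm (ih m (by omega) hm1) (ih h (by omega) hh1)
      · obtain rfl | rfl | rfl | rfl : t = 3 ∨ t = 5 ∨ t = 7 ∨ t = 13 := by omega
        · exact hasPointAvoidingSTS_nineteen
        · exact hasPointAvoidingSTS_thirtyOne
        · exact hasPointAvoidingSTS_fortyThree
        · exact hasPointAvoidingSTS_seventyNine

theorem HasPointAvoidingSTS.exists_isSTS {X : Type*} [Fintype X] [DecidableEq X]
    (h : HasPointAvoidingSTS X) :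
    ∃ B : Finset (Finset X), isSTS B ∧ ∀ x, ∃ A, isAPC B A ∧ x ∉ A.biUnion id := by
  classical
  obtain ⟨𝓑, h𝓑, hparallel⟩ := h
  refine ⟨𝓑.toFinset, ⟨fun b hb => h𝓑.card_mem b (Set.mem_toFinset.1 hb), fun p q hpq => ?_⟩,
    fun x => ?_⟩
  · rw [Finset.card_eq_one_iff_existsUnique]
    simpa using h𝓑.existsUnique p q hpq
  · obtain ⟨𝓐, h𝓐, hpart⟩ := hparallel x
    have hunion : 𝓐.toFinset.biUnion id = Finset.univ.erase x := by
      ext y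
      simp only [Finset.mem_biUnion, Set.mem_toFinset, id, Finset.mem_erase, Finset.mem_univ,
        and_true]
      exact ⟨fun ⟨b, hb, hy⟩ => hpart.subset b hb hy, fun hy => (hpart.existsUnique y hy).exists⟩
    refine ⟨𝓐.toFinset, ⟨Set.toFinset_mono h𝓐, fun b hb c hc hbc => ?_, x, hunion⟩,
      by simp [hunion]⟩
    rw [Set.mem_toFinset] at hb hc
    refine Finset.disjoint_left.2 fun y hyb hyc => hbc ?_
    exact (hpart.existsUnique y (hpart.subset b hb hyb)).unique ⟨hb, hyb⟩ ⟨hc, hyc⟩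

theorem stmt14 (n : ℕ) (hpos : 0 < n) (hmod : n % 6 = 1) (hne : n ≠ 7) :
    ∃ B : Finset (Finset (Fin n)), isSTS B ∧
      ∀ x : Fin n, ∃ A : Finset (Finset (Fin n)),
        isAPC B A ∧ x ∉ A.biUnion id := by
  obtain ⟨t, rfl⟩ : ∃ t, n = 6 * t + 1 := ⟨n / 6, by omega⟩
  exact (hasPointAvoidingSTS_six_mul_add_one t (by omega)).exists_isSTS
end
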